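/- Let a ~ N(0, I_n), x ∈ ℝⁿ a unit vector, and y = f(aᵀx) with E[y] and E[y(aᵀx)²] finite. Then E[y(a aᵀ − I_n)] = ν x xᵀ, where ν := Cov[y, (aᵀx)²]. -/

import Mathlib

open MeasureTheory ProbabilityTheory

/-!
Write `S = aᵀx` and split each coordinate as `aᵢ = cᵢ S + Rᵢ` with `cᵢ = Cov(S, aᵢ) / Var S`. The
residuals are jointly Gaussian with `S` and uncorrelated with it, so they are independent of `S`,
and hence of `f(S)`. In `E[f(S) aᵢ aⱼ]` the cross terms vanish, leaving
`cᵢ cⱼ E[f(S) S²] + E[f(S)] E[Rᵢ Rⱼ]`. The case `f = 1` of the same identity evaluates `E[Rᵢ Rⱼ]`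
as `E[aᵢ aⱼ] - cᵢ cⱼ E[S²]`, and subtracting gives `cᵢ cⱼ Cov(f(S), S²)`.
-/

section Decoupling

variable {Ω : Type*} {mΩ : MeasurableSpace Ω} {P : Measure Ω} {W S X Y : Ω → ℝ}

theorem integrable_mul_of_integrable_mul_sq (hS : AEStronglyMeasurable S P)
    (hW : Integrable W P) (hWS : Integrable (fun ω ↦ W ω * S ω ^ 2) P) :
    Integrable (fun ω ↦ W ω * S ω) P := by
  refine (hW.norm.add hWS.norm).mono' (hW.aestronglyMeasurable.mul hS) (.of_forall fun ω ↦ ?_)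
  have hle : |S ω| ≤ 1 + S ω ^ 2 := by nlinarith [sq_nonneg (|S ω| - 1), sq_abs (S ω)]
  calc ‖W ω * S ω‖ = |W ω| * |S ω| := by rw [Real.norm_eq_abs, abs_mul]
    _ ≤ |W ω| * (1 + S ω ^ 2) := by gcongr
    _ = ‖W ω‖ + ‖W ω * S ω ^ 2‖ := by simp [mul_add]

theorem integral_mul_mul_sub_eq_add (c d k : ℝ)
    (hWS2 : Integrable (fun ω ↦ W ω * S ω ^ 2) P) (hWSX : Integrable (fun ω ↦ W ω * S ω * X ω) P)
    (hWSY : Integrable (fun ω ↦ W ω * S ω * Y ω) P)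
    (hWXY : Integrable (fun ω ↦ W ω * (X ω * Y ω - k)) P) :
    ∫ ω, W ω * ((c * S ω + X ω) * (d * S ω + Y ω) - k) ∂P
      = c * d * (∫ ω, W ω * S ω ^ 2 ∂P) + d * (∫ ω, W ω * S ω * X ω ∂P)
        + c * (∫ ω, W ω * S ω * Y ω ∂P) + ∫ ω, W ω * (X ω * Y ω - k) ∂P := by
  have hint₁ := hWS2.const_mul (c * d)
  have hint₂ := hint₁.fun_add (hWSX.const_mul d)
  have hint₃ := hint₂.fun_add (hWSY.const_mul c)
  simp only [← integral_const_mul]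
  rw [← integral_add hint₁ (hWSX.const_mul d), ← integral_add hint₂ (hWSY.const_mul c),
    ← integral_add hint₃ hWXY]
  congr with ω
  ring

theorem integral_mul_mul_sub_of_indepFun [IsProbabilityMeasure P]
    (hind : IndepFun (fun ω ↦ (W ω, S ω)) (fun ω ↦ (X ω, Y ω)) P)
    (hS : AEStronglyMeasurable S P) (hX : MemLp X 2 P) (hY : MemLp Y 2 P)
    (hX0 : P[X] = 0) (hY0 : P[Y] = 0)
    (hW : Integrable W P) (hWS2 : Integrable (fun ω ↦ W ω * S ω ^ 2) P) (c d k : ℝ) :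
    ∫ ω, W ω * ((c * S ω + X ω) * (d * S ω + Y ω) - k) ∂P
      = c * d * (∫ ω, W ω * S ω ^ 2 ∂P) + (∫ ω, W ω ∂P) * (∫ ω, X ω * Y ω ∂P - k) := by
  have hWS := integrable_mul_of_integrable_mul_sq hS hW hWS2
  have hXi := hX.integrable one_le_two
  have hYi := hY.integrable one_le_two
  have hXY : Integrable (fun ω ↦ X ω * Y ω) P := hX.integrable_mul hY
  have hXYk := hXY.sub (integrable_const k)
  have hindX : IndepFun (fun ω ↦ W ω * S ω) X P :=
    hind.comp (measurable_fst.mul measurable_snd) measurable_fst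
  have hindY : IndepFun (fun ω ↦ W ω * S ω) Y P :=
    hind.comp (measurable_fst.mul measurable_snd) measurable_snd
  have hindXY : IndepFun W (fun ω ↦ X ω * Y ω - k) P :=
    hind.comp measurable_fst ((measurable_fst.mul measurable_snd).sub_const k)
  have hcrossX : ∫ ω, W ω * S ω * X ω ∂P = 0 := by
    rw [hindX.integral_fun_mul_eq_mul_integral hWS.1 hXi.1, hX0, mul_zero]
  have hcrossY : ∫ ω, W ω * S ω * Y ω ∂P = 0 := by
    rw [hindY.integral_fun_mul_eq_mul_integral hWS.1 hYi.1, hY0, mul_zero]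
  have hresidual : ∫ ω, W ω * (X ω * Y ω - k) ∂P = (∫ ω, W ω ∂P) * (∫ ω, X ω * Y ω ∂P - k) := by
    rw [hindXY.integral_fun_mul_eq_mul_integral hW.1 hXYk.1,
      integral_sub hXY (integrable_const k), integral_const, probReal_univ, one_smul]
  rw [integral_mul_mul_sub_eq_add c d k hWS2 (hindX.integrable_mul hWS hXi)
    (hindY.integrable_mul hWS hYi) (hindXY.integrable_mul hW hXYk), hcrossX, hcrossY, hresidual]
  ring

theorem integral_mul_mul_sub_integral_of_indepFun [IsProbabilityMeasure P]
    (hind : IndepFun (fun ω ↦ (W ω, S ω)) (fun ω ↦ (X ω, Y ω)) P)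
    (hS : MemLp S 2 P) (hX : MemLp X 2 P) (hY : MemLp Y 2 P)
    (hX0 : P[X] = 0) (hY0 : P[Y] = 0)
    (hW : Integrable W P) (hWS2 : Integrable (fun ω ↦ W ω * S ω ^ 2) P) (c d : ℝ) :
    ∫ ω, W ω * ((c * S ω + X ω) * (d * S ω + Y ω)
        - ∫ ω', (c * S ω' + X ω') * (d * S ω' + Y ω') ∂P) ∂P
      = c * d * ((∫ ω, W ω * S ω ^ 2 ∂P) - (∫ ω, W ω ∂P) * ∫ ω, S ω ^ 2 ∂P) := by
  have hind1 : IndepFun (fun ω ↦ ((1 : ℝ), S ω)) (fun ω ↦ (X ω, Y ω)) P :=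
    hind.comp (φ := fun p ↦ (1, p.2)) (by fun_prop) measurable_id
  have hunweighted : ∫ ω, (c * S ω + X ω) * (d * S ω + Y ω) ∂P
      = c * d * (∫ ω, S ω ^ 2 ∂P) + ∫ ω, X ω * Y ω ∂P := by
    simpa using integral_mul_mul_sub_of_indepFun hind1 hS.1 hX hY hX0 hY0
      (integrable_const 1) (by simpa using hS.integrable_sq) c d 0
  rw [integral_mul_mul_sub_of_indepFun hind hS.1 hX hY hX0 hY0 hW hWS2, hunweighted]
  ring

end Decoupling

section Gaussian

open scoped Matrix

variable {Ω ι : Type*} {mΩ : MeasurableSpace Ω} {P : Measure Ω}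

theorem indepFun_sub_mul_of_hasGaussianLaw [Finite ι] {S : Ω → ℝ} {U : Ω → ι → ℝ}
    (hSU : HasGaussianLaw (fun ω ↦ (S ω, U ω)) P) {c : ι → ℝ}
    (hc : ∀ i, cov[S, fun ω ↦ U ω i; P] = c i * Var[S; P]) :
    IndepFun S (fun ω i ↦ U ω i - c i * S ω) P := by
  have := hSU.isProbabilityMeasure
  have := Fintype.ofFinite ι
  let L : ℝ × (ι → ℝ) →L[ℝ] (Unit → ℝ) × (ι → ℝ) :=
    (ContinuousLinearMap.pi fun _ ↦ .fst ℝ ℝ (ι → ℝ)).prod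
      (ContinuousLinearMap.pi fun i ↦
        (.proj i ∘L .snd ℝ ℝ (ι → ℝ)) - c i • .fst ℝ ℝ (ι → ℝ))
  have hL : HasGaussianLaw (fun ω ↦ (fun _ : Unit ↦ S ω, fun i ↦ U ω i - c i * S ω)) P :=
    hSU.map_fun L
  have hS := hSU.fst.memLp_two
  have huncorr : ∀ (_ : Unit) i, cov[S, fun ω ↦ U ω i - c i * S ω; P] = 0 := fun _ i ↦ by
    rw [covariance_fun_sub_right hS (hSU.snd.eval i).memLp_two (hS.const_mul (c i)),
      covariance_const_mul_right, covariance_self hS.aemeasurable, hc, sub_self]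
  exact (hL.indepFun_of_covariance_eval (X := fun _ ↦ S)
    (Y := fun i ω ↦ U ω i - c i * S ω) huncorr).comp (measurable_pi_apply ()) measurable_id

theorem integral_mul_mul_sub_covariance_of_hasGaussianLaw [Finite ι] {S : Ω → ℝ}
    {U : Ω → ι → ℝ} (hSU : HasGaussianLaw (fun ω ↦ (S ω, U ω)) P) (hS0 : P[S] = 0)
    (hU0 : ∀ i, ∫ ω, U ω i ∂P = 0) {c : ι → ℝ}
    (hc : ∀ i, cov[S, fun ω ↦ U ω i; P] = c i * Var[S; P])
    {f : ℝ → ℝ} (hf : Measurable f) (hfS : Integrable (fun ω ↦ f (S ω)) P)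
    (hfS2 : Integrable (fun ω ↦ f (S ω) * S ω ^ 2) P) (i j : ι) :
    ∫ ω, f (S ω) * (U ω i * U ω j - cov[fun ω ↦ U ω i, fun ω ↦ U ω j; P]) ∂P
      = c i * c j * ((∫ ω, f (S ω) * S ω ^ 2 ∂P) - (∫ ω, f (S ω) ∂P) * ∫ ω, S ω ^ 2 ∂P) := by
  have := hSU.isProbabilityMeasure
  have := Fintype.ofFinite ι
  let R (k : ι) (ω : Ω) : ℝ := U ω k - c k * S ω
  have hS : MemLp S 2 P := hSU.fst.memLp_two
  have hU (k : ι) : MemLp (fun ω ↦ U ω k) 2 P := (hSU.snd.eval k).memLp_two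
  have hR (k : ι) : MemLp (R k) 2 P := (hU k).sub (hS.const_mul (c k))
  have hR0 (k : ι) : P[R k] = 0 := by
    rw [integral_sub ((hU k).integrable one_le_two) ((hS.integrable one_le_two).const_mul _),
      integral_const_mul, hU0, hS0, mul_zero, sub_zero]
  have hind : IndepFun (fun ω ↦ (f (S ω), S ω)) (fun ω ↦ (R i ω, R j ω)) P :=
    (indepFun_sub_mul_of_hasGaussianLaw hSU hc).comp (φ := fun s ↦ (f s, s))
      (ψ := fun v : ι → ℝ ↦ (v i, v j)) (by fun_prop) (by fun_prop)
  have hcov : cov[fun ω ↦ U ω i, fun ω ↦ U ω j; P] = ∫ ω, U ω i * U ω j ∂P := by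
    simp [covariance, hU0]
  have hsplit (k : ι) (ω : Ω) : c k * S ω + R k ω = U ω k := add_sub_cancel _ _
  simpa only [hsplit, hcov] using integral_mul_mul_sub_integral_of_indepFun hind hS
    (hR i) (hR j) (hR0 i) (hR0 j) hfS hfS2 (c i) (c j)

variable [Fintype ι] {a : Ω → ι → ℝ}

theorem covariance_dotProduct_left [IsFiniteMeasure P] {Z : Ω → ℝ} (x : ι → ℝ)
    (ha : ∀ i, MemLp (fun ω ↦ a ω i) 2 P) (hZ : MemLp Z 2 P) :
    cov[fun ω ↦ a ω ⬝ᵥ x, Z; P] = (fun i ↦ cov[fun ω ↦ a ω i, Z; P]) ⬝ᵥ x := by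
  simp only [dotProduct]
  rw [covariance_fun_sum_left (fun i ↦ (ha i).mul_const (x i)) hZ]
  simp only [covariance_mul_const_left]

theorem covariance_dotProduct_eval [IsFiniteMeasure P] {C : Matrix ι ι ℝ} (x : ι → ℝ)
    (ha : ∀ i, MemLp (fun ω ↦ a ω i) 2 P)
    (hC : ∀ i j, cov[fun ω ↦ a ω i, fun ω ↦ a ω j; P] = C i j) (i : ι) :
    cov[fun ω ↦ a ω ⬝ᵥ x, fun ω ↦ a ω i; P] = (C *ᵥ x) i := by
  rw [covariance_dotProduct_left x ha (ha i)]
  simp only [covariance_comm _ (fun ω ↦ a ω i), hC, Matrix.mulVec]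

theorem variance_dotProduct [IsFiniteMeasure P] {C : Matrix ι ι ℝ} (x : ι → ℝ)
    (ha : ∀ i, MemLp (fun ω ↦ a ω i) 2 P)
    (hC : ∀ i j, cov[fun ω ↦ a ω i, fun ω ↦ a ω j; P] = C i j) :
    Var[fun ω ↦ a ω ⬝ᵥ x; P] = x ⬝ᵥ C *ᵥ x := by
  have hS : MemLp (fun ω ↦ a ω ⬝ᵥ x) 2 P :=
    memLp_finsetSum _ fun i _ ↦ (ha i).mul_const (x i)
  rw [← covariance_self hS.aemeasurable, covariance_dotProduct_left x ha hS, dotProduct_comm]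
  simp only [covariance_comm _ (fun ω ↦ a ω ⬝ᵥ x), covariance_dotProduct_eval x ha hC]

theorem stmt3_general (ha : HasGaussianLaw a P) (ha0 : ∀ i, ∫ ω, a ω i ∂P = 0)
    {C : Matrix ι ι ℝ} (hC : ∀ i j, cov[fun ω ↦ a ω i, fun ω ↦ a ω j; P] = C i j)
    {x : ι → ℝ} (hx : x ⬝ᵥ C *ᵥ x ≠ 0) {f : ℝ → ℝ} (hf : Measurable f)
    (hfS : Integrable (fun ω ↦ f (a ω ⬝ᵥ x)) P)
    (hfS2 : Integrable (fun ω ↦ f (a ω ⬝ᵥ x) * (a ω ⬝ᵥ x) ^ 2) P) (i j : ι) :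
    ∫ ω, f (a ω ⬝ᵥ x) * (a ω i * a ω j - C i j) ∂P
      = ((∫ ω, f (a ω ⬝ᵥ x) * (a ω ⬝ᵥ x) ^ 2 ∂P)
          - (∫ ω, f (a ω ⬝ᵥ x) ∂P) * ∫ ω, (a ω ⬝ᵥ x) ^ 2 ∂P)
        / (x ⬝ᵥ C *ᵥ x) ^ 2 * (C *ᵥ x) i * (C *ᵥ x) j := by
  have := ha.isProbabilityMeasure
  have haL2 (i : ι) : MemLp (fun ω ↦ a ω i) 2 P := (ha.eval i).memLp_two
  have hS0 : ∫ ω, a ω ⬝ᵥ x ∂P = 0 := by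
    simp only [dotProduct]
    rw [integral_finsetSum _ fun i _ ↦ ((haL2 i).integrable one_le_two).mul_const (x i)]
    simp only [integral_mul_const, ha0, zero_mul, Finset.sum_const_zero]
  have hSa : HasGaussianLaw (fun ω ↦ (a ω ⬝ᵥ x, a ω)) P := by
    let L : (ι → ℝ) →L[ℝ] ℝ × (ι → ℝ) :=
      (∑ i, (ContinuousLinearMap.proj i).smulRight (x i)).prod (.id ℝ _)
    have hL (v : ι → ℝ) : L v = (v ⬝ᵥ x, v) := by simp [L, dotProduct]
    simpa only [hL] using ha.map_fun L
  have hcov (i : ι) : cov[fun ω ↦ a ω ⬝ᵥ x, fun ω ↦ a ω i; P]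
      = (C *ᵥ x) i / (x ⬝ᵥ C *ᵥ x) * Var[fun ω ↦ a ω ⬝ᵥ x; P] := by
    rw [covariance_dotProduct_eval x haL2 hC, variance_dotProduct x haL2 hC,
      div_mul_cancel₀ _ hx]
  rw [← hC, integral_mul_mul_sub_covariance_of_hasGaussianLaw hSa hS0 ha0 hcov hf hfS hfS2]
  ring

end Gaussian

section Product

open scoped NNReal

variable {ι : Type*} [Fintype ι]

instance isGaussian_pi {E : ι → Type*} [∀ i, NormedAddCommGroup (E i)]
    [∀ i, NormedSpace ℝ (E i)] [∀ i, CompleteSpace (E i)] [∀ i, SecondCountableTopology (E i)]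
    [∀ i, MeasurableSpace (E i)] [∀ i, BorelSpace (E i)] {μ : ∀ i, Measure (E i)}
    [∀ i, IsGaussian (μ i)] : IsGaussian (Measure.pi μ) := by
  have hind : iIndepFun (fun i (v : ∀ i, E i) ↦ v i) (Measure.pi μ) :=
    iIndepFun_pi (X := fun _ ↦ id) fun _ ↦ aemeasurable_id
  have hlaw (i : ι) : HasGaussianLaw (fun v : ∀ i, E i ↦ v i) (Measure.pi μ) :=
    (measurePreserving_eval μ i).hasLaw.hasGaussianLaw
  simpa using (hind.hasGaussianLaw hlaw).isGaussian_map

theorem covariance_eval_pi [DecidableEq ι] {μ : ι → Measure ℝ} [∀ i, IsProbabilityMeasure (μ i)]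
    (hμ : ∀ i, MemLp id 2 (μ i)) (i j : ι) :
    cov[fun v ↦ v i, fun v ↦ v j; Measure.pi μ] = Matrix.diagonal (fun k ↦ Var[id; μ k]) i j := by
  obtain rfl | hij := eq_or_ne i j
  · rw [covariance_self (measurable_pi_apply i).aemeasurable,
      (measurePreserving_eval μ i).hasLaw.variance_eq, Matrix.diagonal_apply_eq]
  · have hL2 (k : ι) : MemLp (fun v : ι → ℝ ↦ v k) 2 (Measure.pi μ) :=
      (hμ k).comp_measurePreserving (measurePreserving_eval μ k)
    have hind : iIndepFun (fun k (v : ι → ℝ) ↦ v k) (Measure.pi μ) :=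
      iIndepFun_pi (X := fun _ ↦ id) fun _ ↦ aemeasurable_id
    rw [(hind.indepFun hij).covariance_eq_zero (hL2 i) (hL2 j), Matrix.diagonal_apply_ne _ hij]

variable {Ω : Type*} {mΩ : MeasurableSpace Ω} {P : Measure Ω} {a : Ω → ι → ℝ} {m : ι → ℝ}
  {v : ι → ℝ≥0}

theorem integral_eval_of_hasLaw_pi_gaussianReal
    (ha : HasLaw a (Measure.pi fun i ↦ gaussianReal (m i) (v i)) P) (i : ι) :
    ∫ ω, a ω i ∂P = m i := by
  have hai : HasLaw (fun ω ↦ a ω i) (gaussianReal (m i) (v i)) P :=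
    (measurePreserving_eval (fun i ↦ gaussianReal (m i) (v i)) i).hasLaw.comp ha
  rw [hai.integral_eq, integral_id_gaussianReal]

theorem covariance_eval_of_hasLaw_pi_gaussianReal [DecidableEq ι]
    (ha : HasLaw a (Measure.pi fun i ↦ gaussianReal (m i) (v i)) P) (i j : ι) :
    cov[fun ω ↦ a ω i, fun ω ↦ a ω j; P] = Matrix.diagonal (fun k ↦ (v k : ℝ)) i j := by
  rw [ha.covariance_fun_comp (measurable_pi_apply i).aemeasurable
    (measurable_pi_apply j).aemeasurable, covariance_eval_pi fun _ ↦ IsGaussian.memLp_two_id]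
  simp only [variance_id_gaussianReal]

end Product

/-- For `a ~ N(0, I_n)`, a unit vector `x` and `y = f(aᵀx)`, the matrix identity
`E[y (a aᵀ − I_n)] = ν x xᵀ` holds entrywise, where `ν := Cov[y, (aᵀx)²]`. -/
theorem stmt3 {Ω : Type*} [MeasureSpace Ω] [IsProbabilityMeasure (ℙ : Measure Ω)]
    {n : ℕ} (a : Ω → (Fin n → ℝ)) (ha : Measurable a)
    (hlaw : Measure.map a ℙ = Measure.pi fun _ : Fin n => gaussianReal 0 1)
    (x : Fin n → ℝ) (hx : ∑ i, x i ^ 2 = 1)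
    (f : ℝ → ℝ) (hf : Measurable f)
    (hy : Integrable (fun ω => f (∑ i, a ω i * x i)) ℙ)
    (hyS2 : Integrable (fun ω => f (∑ i, a ω i * x i) * (∑ i, a ω i * x i) ^ 2) ℙ)
    (hmom : ∀ i j : Fin n,
      Integrable (fun ω => f (∑ i', a ω i' * x i') * (a ω i * a ω j)) ℙ)
    (ν : ℝ)
    (hν : ν = (∫ ω, f (∑ i, a ω i * x i) * (∑ i, a ω i * x i) ^ 2)
        - (∫ ω, f (∑ i, a ω i * x i)) * (∫ ω, (∑ i, a ω i * x i) ^ 2)) :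
    ∀ i j : Fin n,
      (∫ ω, f (∑ i', a ω i' * x i') *
          (a ω i * a ω j - if i = j then (1 : ℝ) else 0))
        = ν * x i * x j := by
  have ha' : HasLaw a (Measure.pi fun _ ↦ gaussianReal 0 1) ℙ := ⟨ha.aemeasurable, hlaw⟩
  simpa [Matrix.one_apply, dotProduct, ← sq, hx, ← hν] using
    stmt3_general ha'.hasGaussianLaw (integral_eval_of_hasLaw_pi_gaussianReal ha')
      (covariance_eval_of_hasLaw_pi_gaussianReal ha') (x := x) (by simp [dotProduct, ← sq, hx])
      hf hy hyS2
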